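/- If x is a cut vertex of Γ(S) (deleting x from Γ(S) yields a disconnected graph), then {0, x} is an ideal of S; moreover, either x is adjacent in Γ(S) to every other vertex of Γ(S), or x ∈ Sx (i.e. x = s·x for some s ∈ S). -/

import Mathlib

/-- A commutative semigroup with a zero element. -/
class CommSemigroupWithZero (S : Type*) extends SemigroupWithZero S where
  mul_comm : ∀ a b : S, a * b = b * a

variable (S : Type*) [CommSemigroupWithZero S]

/-- The set of zero-divisors of `S`. -/
def zdivs : Set S := {x | ∃ y, y ≠ 0 ∧ x * y = 0}

/-- The vertex set `Z(S)* = Z(S) \ {0}` of the zero-divisor graph. -/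
def zdVerts : Set S := {x | x ≠ 0 ∧ x ∈ zdivs S}

/-- The zero-divisor graph `Γ(S)`. -/
def zdGraph : SimpleGraph (zdVerts S) where
  Adj x y := x ≠ y ∧ (x : S) * y = 0
  symm := by
    constructor
    rintro x y ⟨hne, h⟩
    exact ⟨hne.symm, by rw [CommSemigroupWithZero.mul_comm]; exact h⟩
  loopless := ⟨fun x h => h.1 rfl⟩

/-- `I` is an ideal of the semigroup `S`. -/
def IsIdeal (I : Set S) : Prop := I.Nonempty ∧ ∀ x ∈ I, ∀ s : S, x * s ∈ I

/-- `p` is a prime ideal of the semigroup `S`. -/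
def IsPrimeIdeal (p : Set S) : Prop :=
  IsIdeal S p ∧ ∀ x y : S, (∀ s : S, x * s * y ∈ p) → x ∈ p ∨ y ∈ p

/-- `x` is nilpotent: `x ^ (n + 1) = 0` for some `n`. -/
def IsNil (x : S) : Prop := ∃ n : ℕ, (fun y => x * y)^[n] x = 0

/-- The annihilator of `a`. -/
def Ann (a : S) : Set S := {s | s * a = 0}

/-- The set of associated primes of `S`. -/
def Ass : Set (Set S) := {p | IsPrimeIdeal S p ∧ ∃ x : S, p = Ann S x}

/-! Multiplying `x` by `s` only enlarges the annihilator, so every neighbour of `x` in `Γ(S)` equals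
or is adjacent to `x * s`. If `x * s` were neither `0` nor `x`, then in any walk of the connected
graph `Γ(S)` the vertex `x` could be replaced by `x * s`, and `Γ(S)` would stay connected without
`x`. -/

section Graph

variable {V W : Type*} {G : SimpleGraph V} {H : SimpleGraph W}

theorem preconnected_of_surjective_of_adj_reachable (hG : G.Preconnected) {f : V → W}
    (hf : f.Surjective) (hadj : ∀ u v, G.Adj u v → H.Reachable (f u) (f v)) :
    H.Preconnected := by
  refine hf.forall₂.mpr fun u v => ?_
  have huv := (G.reachable_iff_reflTransGen u v).mp (hG u v)
  induction huv with
  | refl => exact .rfl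
  | tail _ hvw ih => exact ih.trans (hadj _ _ hvw)

theorem connected_induce_compl_singleton_of_neighborSet_subset (hG : G.Preconnected) {x z : V}
    (hzx : z ≠ x) (hxz : G.neighborSet x ⊆ insert z (G.neighborSet z)) :
    (G.induce {x}ᶜ).Connected := by
  classical
  let retract : V → ({x}ᶜ : Set V) := fun v => if hv : v = x then ⟨z, hzx⟩ else ⟨v, hv⟩
  have retract_self : retract x = ⟨z, hzx⟩ := dif_pos rfl
  have retract_of_ne {v : V} (hv : v ≠ x) : retract v = ⟨v, hv⟩ := dif_neg hv
  have surjective_retract : retract.Surjective := fun v => ⟨v, retract_of_ne v.2⟩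
  have reachable_of_adj_self (v : V) (hv : G.Adj x v) :
      (G.induce {x}ᶜ).Reachable (retract x) (retract v) := by
    rw [retract_self, retract_of_ne hv.ne']
    rcases hxz hv with rfl | hzv
    · exact .rfl
    · exact SimpleGraph.Adj.reachable hzv
  have reachable_of_adj (u v : V) (huv : G.Adj u v) :
      (G.induce {x}ᶜ).Reachable (retract u) (retract v) := by
    by_cases hu : u = x
    · exact hu ▸ reachable_of_adj_self v (hu ▸ huv)
    by_cases hv : v = x
    · exact hv ▸ (reachable_of_adj_self u (hv ▸ huv.symm)).symm
    rw [retract_of_ne hu, retract_of_ne hv]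
    exact SimpleGraph.Adj.reachable huv
  exact
    { preconnected :=
        preconnected_of_surjective_of_adj_reachable hG surjective_retract reachable_of_adj
      nonempty := ⟨⟨z, hzx⟩⟩ }

end Graph

section ZeroDivisorGraph

variable {S}

instance CommSemigroupWithZero.toCommSemigroup : CommSemigroup S where
  mul_comm := CommSemigroupWithZero.mul_comm

theorem isIdeal_zero_pair_iff {x : S} : IsIdeal S {0, x} ↔ ∀ s, x * s = 0 ∨ x * s = x := by
  refine ⟨fun h => h.2 x (Or.inr rfl), fun h => ⟨⟨0, Or.inl rfl⟩, ?_⟩⟩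
  rintro _ (rfl | rfl) s
  · exact Or.inl (zero_mul s)
  · exact h s

theorem mul_mem_zdVerts {x s : S} (hx : x ∈ zdVerts S) (hxs : x * s ≠ 0) :
    x * s ∈ zdVerts S := by
  obtain ⟨y, hy, hxy⟩ := hx.2
  exact ⟨hxs, y, hy, by rw [mul_right_comm, hxy, zero_mul]⟩

theorem zdGraph_reachable_of_mul_eq_zero {a b : zdVerts S} (hab : (a : S) * b = 0) :
    (zdGraph S).Reachable a b := by
  by_cases h : a = b
  · exact h ▸ .rfl
  · exact SimpleGraph.Adj.reachable ⟨h, hab⟩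

theorem exists_zdVerts_mul_eq_zero (a : zdVerts S) : ∃ b : zdVerts S, (a : S) * b = 0 := by
  obtain ⟨b, hb, hab⟩ := a.2.2
  exact ⟨⟨b, hb, a, a.2.1, by rw [mul_comm, hab]⟩, hab⟩

theorem zdGraph_preconnected : (zdGraph S).Preconnected := by
  intro a b
  obtain ⟨a', haa'⟩ := exists_zdVerts_mul_eq_zero a
  obtain ⟨b', hbb'⟩ := exists_zdVerts_mul_eq_zero b
  have hb'b : (b' : S) * b = 0 := by rw [mul_comm, hbb']
  by_cases ha'b' : (a' : S) * b' = 0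
  · exact (zdGraph_reachable_of_mul_eq_zero haa').trans
      ((zdGraph_reachable_of_mul_eq_zero ha'b').trans (zdGraph_reachable_of_mul_eq_zero hb'b))
  · let w : zdVerts S := ⟨a' * b', mul_mem_zdVerts a'.2 ha'b'⟩
    have haw : (a : S) * w = 0 := by rw [← mul_assoc, haa', zero_mul]
    have hwb : (w : S) * b = 0 := by rw [mul_assoc, hb'b, mul_zero]
    exact (zdGraph_reachable_of_mul_eq_zero haw).trans (zdGraph_reachable_of_mul_eq_zero hwb)

theorem zdGraph_neighborSet_subset_of_dvd {x z : zdVerts S} (hxz : (x : S) ∣ z) :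
    (zdGraph S).neighborSet x ⊆ insert z ((zdGraph S).neighborSet z) := by
  rintro y ⟨-, hxy⟩
  obtain ⟨s, hs⟩ := hxz
  have hzy : (z : S) * y = 0 := by rw [hs, mul_right_comm, hxy, zero_mul]
  exact or_iff_not_imp_left.mpr fun hyz => ⟨Ne.symm hyz, hzy⟩

theorem mul_eq_zero_or_eq_self_of_not_connected {x : zdVerts S}
    (hcut : ¬ ((zdGraph S).induce {x}ᶜ).Connected) (s : S) :
    (x : S) * s = 0 ∨ (x : S) * s = x := by
  by_contra! h
  let z : zdVerts S := ⟨x * s, mul_mem_zdVerts x.2 h.1⟩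
  have hzx : z ≠ x := Subtype.coe_ne_coe.mp h.2
  exact hcut (connected_induce_compl_singleton_of_neighborSet_subset zdGraph_preconnected hzx
    (zdGraph_neighborSet_subset_of_dvd (dvd_mul_right _ s)))

end ZeroDivisorGraph

/-- If `x` is a cut vertex of `Γ(S)`, then `{0, x}` is an ideal of
`S`; moreover either `x` is adjacent to every other vertex of `Γ(S)`, or `x ∈ Sx`. -/
theorem cut_vertex_ideal (x : zdVerts S)
    (hcut : ¬ ((zdGraph S).induce ({x}ᶜ : Set (zdVerts S))).Connected) :
    IsIdeal S {(0 : S), (x : S)} ∧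
      ((∀ y : zdVerts S, y ≠ x → (zdGraph S).Adj x y) ∨ ∃ s : S, s * (x : S) = (x : S)) := by
  have hx := mul_eq_zero_or_eq_self_of_not_connected hcut
  refine ⟨isIdeal_zero_pair_iff.mpr hx, or_iff_not_imp_right.mpr fun hfix y hyx => ?_⟩
  have hxy : (x : S) * y ≠ x := fun h => hfix ⟨y, by rw [mul_comm, h]⟩
  exact ⟨hyx.symm, (hx y).resolve_right hxy⟩
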